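/- Fix integers n ≥ 1 and k with 1 ≤ k ≤ n, let x̃ ∈ ℝⁿ be k-sparse nonnegative, σ > 0, g ∈ ℝᵐ and h ∈ ℝⁿ. Let Γ = {(ν, λ) : ν ≥ 0, λ ∈ ℝⁿ, 0 ≤ λ_i ≤ 2ν for all i} and define ξ_dual(σ, g, h, x̃) = inf_{d ≥ 0} sup_{(ν, λ) ∈ Γ} ( √(d² + σ²)·‖g‖₂ − d·‖h + ν·1 − λ‖₂ − Σ_{i=n−k+1}^{n} λ_i·x̃_i ). Assume there exists (ν̂, λ̂) ∈ Γ attaining the supremum defining ξ_ov(σ, g, h, x̃) and satisfying ‖h + ν̂·1 − λ̂‖₂ < ‖g‖₂. Then ξ_dual(σ, g, h, x̃) = ξ_ov(σ, g, h, x̃). -/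

import Mathlib

/-!
Write `r (ν, λ) = ‖h + ν·1 - λ‖`, `c (ν, λ) = ∑ λᵢ x̃ᵢ` and `G = ‖g‖`; both `r` and `c` are
convex on the convex cone `Γ`. By Cauchy–Schwarz, `√(d² + σ²) G - d r ≥ σ √(G² - r²)` whenever
`r ≤ G`, with equality at `d = σ r / √(G² - r²)`. At a maximizer `x₀` with `r x₀ < G`, the
first-order condition along segments of `Γ` says exactly that `x₀` also maximizes the Lagrangian
`√(d² + σ²) G - d r - c` for this value of `d`, so that `(d, x₀)` is a saddle point.
-/

noncomputable def e2norm {d : ℕ} (x : Fin d → ℝ) : ℝ := Real.sqrt (∑ i, x i ^ 2)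

def kSparseNonneg (n k : ℕ) (x : Fin n → ℝ) : Prop :=
  (∀ i : Fin n, (i : ℕ) < n - k → x i = 0) ∧ ∀ i, 0 ≤ x i

noncomputable def tailSum {n : ℕ} (k : ℕ) (lam x : Fin n → ℝ) : ℝ :=
  ∑ i ∈ Finset.univ.filter (fun i : Fin n => n - k ≤ (i : ℕ)), lam i * x i

/-- The constraint set of the "overwhelming" optimization ξ_ov. -/
def xiOvSet (m n k : ℕ) (σ : ℝ) (xt : Fin n → ℝ) (g : Fin m → ℝ) (h : Fin n → ℝ) :
    Set ℝ :=
  {z : ℝ | ∃ ν : ℝ, ∃ lam : Fin n → ℝ, 0 ≤ ν ∧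
    (∀ i, 0 ≤ lam i ∧ lam i ≤ 2 * ν) ∧
    e2norm (fun i => h i + ν - lam i) ≤ e2norm g ∧
    z = σ * Real.sqrt (e2norm g ^ 2 - e2norm (fun i => h i + ν - lam i) ^ 2)
        - tailSum k lam xt}

/-- The inner supremum over Γ in the definition of ξ_dual, as a function of d. -/
noncomputable def supAtD (m n k : ℕ) (σ : ℝ) (xt : Fin n → ℝ) (g : Fin m → ℝ)
    (h : Fin n → ℝ) (d : ℝ) : ℝ :=
  sSup {z : ℝ | ∃ ν : ℝ, ∃ lam : Fin n → ℝ, 0 ≤ ν ∧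
    (∀ i, 0 ≤ lam i ∧ lam i ≤ 2 * ν) ∧
    z = Real.sqrt (d ^ 2 + σ ^ 2) * e2norm g
        - d * e2norm (fun i => h i + ν - lam i) - tailSum k lam xt}

open Set

lemma csInf_csSup_eq_of_isSaddlePointOn {α γ β : Type*} [ConditionallyCompleteLattice β]
    {X : Set α} {Y : Set γ} {f : α → γ → β} {a : α} {b : γ} (ha : a ∈ X) (hb : b ∈ Y)
    (hab : IsSaddlePointOn X Y f a b) (hbdd : ∀ x ∈ X, BddAbove (f x '' Y)) :
    sInf ((fun x ↦ sSup (f x '' Y)) '' X) = f a b := by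
  have hmax : sSup (f a '' Y) = f a b :=
    IsGreatest.csSup_eq ⟨mem_image_of_mem _ hb, forall_mem_image.2 (hab a ha)⟩
  have hmin : ∀ x ∈ X, f a b ≤ sSup (f x '' Y) := fun x hx ↦
    (hab x hx b hb).trans (le_csSup (hbdd x hx) (mem_image_of_mem _ hb))
  exact IsLeast.csInf_eq ⟨⟨a, ha, hmax⟩, forall_mem_image.2 hmin⟩

section SphericalProfile

variable {σ G a : ℝ}

lemma mul_sqrt_sq_sub_sq_add_mul_le (σ d : ℝ) (hG : 0 ≤ G) (haG : a ^ 2 ≤ G ^ 2) :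
    σ * √(G ^ 2 - a ^ 2) + d * a ≤ √(d ^ 2 + σ ^ 2) * G := by
  have hs : √(G ^ 2 - a ^ 2) ^ 2 = G ^ 2 - a ^ 2 := Real.sq_sqrt (sub_nonneg.2 haG)
  calc σ * √(G ^ 2 - a ^ 2) + d * a
      ≤ √((d ^ 2 + σ ^ 2) * G ^ 2) :=
        Real.le_sqrt_of_sq_le (by nlinarith [sq_nonneg (d * √(G ^ 2 - a ^ 2) - σ * a)])
    _ = √(d ^ 2 + σ ^ 2) * G := by rw [Real.sqrt_mul (by positivity), Real.sqrt_sq hG]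

/-- The multiplier `d ≥ 0` for which Cauchy–Schwarz between `(σ, d)` and `(√(G² - a²), a)` is an
equality; it is also minus the slope of `u ↦ σ √(G² - u²)` at `a`. It takes the junk value `0` when
`G² ≤ a²`. -/
noncomputable def saddleMultiplier (σ G a : ℝ) : ℝ := σ * a / √(G ^ 2 - a ^ 2)

lemma saddleMultiplier_nonneg (G : ℝ) (hσ : 0 ≤ σ) (ha : 0 ≤ a) : 0 ≤ saddleMultiplier σ G a :=
  div_nonneg (mul_nonneg hσ ha) (Real.sqrt_nonneg _)

lemma sqrt_saddleMultiplier_sq_add_mul_sub (hσ : 0 ≤ σ) (hG : 0 ≤ G) (haG : a ^ 2 < G ^ 2) :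
    √(saddleMultiplier σ G a ^ 2 + σ ^ 2) * G - saddleMultiplier σ G a * a
      = σ * √(G ^ 2 - a ^ 2) := by
  have hs : 0 < √(G ^ 2 - a ^ 2) := Real.sqrt_pos.2 (sub_pos.2 haG)
  have hs2 : √(G ^ 2 - a ^ 2) ^ 2 = G ^ 2 - a ^ 2 := Real.sq_sqrt (sub_pos.2 haG).le
  unfold saddleMultiplier
  set s := √(G ^ 2 - a ^ 2)
  have hnorm : √((σ * a / s) ^ 2 + σ ^ 2) = σ * G / s := by
    rw [Real.sqrt_eq_iff_eq_sq (by positivity) (by positivity)]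
    field_simp
    linear_combination σ ^ 2 * hs2
  rw [hnorm]
  field_simp
  linear_combination -σ * hs2

lemma hasDerivAt_mul_sqrt_sq_sub_sq (σ : ℝ) (haG : a ^ 2 < G ^ 2) :
    HasDerivAt (fun u ↦ σ * √(G ^ 2 - u ^ 2)) (-saddleMultiplier σ G a) a := by
  have hs : 0 < √(G ^ 2 - a ^ 2) := Real.sqrt_pos.2 (sub_pos.2 haG)
  refine ((((hasDerivAt_pow 2 a).const_sub (G ^ 2)).sqrt
    (sub_pos.2 haG).ne').const_mul σ).congr_deriv ?_
  rw [saddleMultiplier]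
  field_simp
  norm_num

lemma antitoneOn_mul_sqrt_sq_sub_sq (G : ℝ) (hσ : 0 ≤ σ) :
    AntitoneOn (fun u ↦ σ * √(G ^ 2 - u ^ 2)) (Ici 0) := by
  intro u hu v _ huv
  have hu : 0 ≤ u := hu
  dsimp only
  gcongr

end SphericalProfile

section Lagrangian

variable {E : Type*} {s : Set E} {r c : E → ℝ} {σ G : ℝ} {x₀ : E}

/-- The objective `√(d² + σ²) G - d r(x) - c(x)` of the `inf`-`sup` problem defining `ξ_dual`, for
an abstract residual norm `r` and an abstract cost `c`. -/
noncomputable def lagrangian (σ G : ℝ) (r c : E → ℝ) (d : ℝ) (x : E) : ℝ :=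
  √(d ^ 2 + σ ^ 2) * G - d * r x - c x

/-- The objective `σ √(G² - r(x)²) - c(x)` of the problem defining `ξ_ov`, for an abstract residual
norm `r` and an abstract cost `c`; it is meaningful where `r x ≤ G`. -/
noncomputable def reducedObjective (σ G : ℝ) (r c : E → ℝ) (x : E) : ℝ :=
  σ * √(G ^ 2 - r x ^ 2) - c x

lemma reducedObjective_le_lagrangian (σ d : ℝ) (c : E → ℝ) {x : E} (hG : 0 ≤ G)
    (hx : r x ^ 2 ≤ G ^ 2) : reducedObjective σ G r c x ≤ lagrangian σ G r c d x := by
  have := mul_sqrt_sq_sub_sq_add_mul_le σ d hG hx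
  rw [reducedObjective, lagrangian]
  linarith

lemma lagrangian_saddleMultiplier (c : E → ℝ) {x : E} (hσ : 0 ≤ σ) (hG : 0 ≤ G)
    (hx : r x ^ 2 < G ^ 2) :
    lagrangian σ G r c (saddleMultiplier σ G (r x)) x = reducedObjective σ G r c x := by
  rw [lagrangian, reducedObjective, sqrt_saddleMultiplier_sq_add_mul_sub hσ hG hx]

lemma bddAbove_lagrangian_image (σ G : ℝ) {d : ℝ} (hd : 0 ≤ d) (hr : MapsTo r s (Ici 0))
    (hc : BddBelow (c '' s)) : BddAbove (lagrangian σ G r c d '' s) := by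
  obtain ⟨b, hb⟩ := hc
  refine ⟨√(d ^ 2 + σ ^ 2) * G - b, forall_mem_image.2 fun x hx ↦ ?_⟩
  have hcost : b ≤ c x := hb (mem_image_of_mem c hx)
  have hres : 0 ≤ d * r x := mul_nonneg hd (hr hx)
  rw [lagrangian]
  linarith

variable [AddCommGroup E] [Module ℝ E]

lemma map_lineMap_le_of_convexOn {f : E → ℝ} (hf : ConvexOn ℝ s f) {x y : E} (hx : x ∈ s)
    (hy : y ∈ s) {t : ℝ} (ht : t ∈ Icc (0 : ℝ) 1) :
    f (AffineMap.lineMap x y t) ≤ AffineMap.lineMap (f x) (f y) t := by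
  simpa only [AffineMap.lineMap_apply_module] using
    hf.2 hx hy (sub_nonneg.2 ht.2) ht.1 (sub_add_cancel 1 t)

lemma deriv_mul_sub_le_sub_of_isMaxOn (hr : ConvexOn ℝ s r) (hc : ConvexOn ℝ s c)
    {D : Set ℝ} (hD : Convex ℝ D) (hrD : MapsTo r s D) {ψ : ℝ → ℝ} {ψ' : ℝ}
    (hψ : AntitoneOn ψ D) (hx₀ : x₀ ∈ s) (hlt : r x₀ < G) (hψ' : HasDerivAt ψ ψ' (r x₀))
    (hmax : IsMaxOn (fun x ↦ ψ (r x) - c x) {x ∈ s | r x ≤ G} x₀) {x : E} (hx : x ∈ s) :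
    ψ' * (r x - r x₀) ≤ c x - c x₀ := by
  -- Replacing `r` and `c` by their chords on `[x₀, x]` makes the objective differentiable and,
  -- by convexity, only decreases it, so `t = 0` remains a maximizer.
  let ρ : ℝ → ℝ := AffineMap.lineMap (r x₀) (r x)
  let κ : ℝ → ℝ := AffineMap.lineMap (c x₀) (c x)
  have hρ0 : ρ 0 = r x₀ := AffineMap.lineMap_apply_zero _ _
  have hκ0 : κ 0 = c x₀ := AffineMap.lineMap_apply_zero _ _
  have hρ' : HasDerivAt ρ (r x - r x₀) 0 := AffineMap.hasDerivAt_lineMap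
  have hκ' : HasDerivAt κ (c x - c x₀) 0 := AffineMap.hasDerivAt_lineMap
  have hφ' : HasDerivAt (fun t ↦ ψ (ρ t) - κ t) (ψ' * (r x - r x₀) - (c x - c x₀)) 0 :=
    (HasDerivAt.comp 0 (hρ0 ▸ hψ') hρ').sub hκ'
  have hφmax : IsLocalMaxOn (fun t ↦ ψ (ρ t) - κ t) (Icc 0 1) 0 := by
    have hρG : ∀ᶠ t in nhdsWithin 0 (Icc 0 1), ρ t < G :=
      (hρ'.continuousAt.eventually_lt continuousAt_const (hρ0 ▸ hlt)).filter_mono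
        nhdsWithin_le_nhds
    filter_upwards [hρG, self_mem_nhdsWithin] with t htG ht
    let y : E := AffineMap.lineMap x₀ x t
    have hy : y ∈ s := hr.1.lineMap_mem hx₀ hx ht
    have hry : r y ≤ ρ t := map_lineMap_le_of_convexOn hr hx₀ hx ht
    have hcy : c y ≤ κ t := map_lineMap_le_of_convexOn hc hx₀ hx ht
    calc ψ (ρ t) - κ t
        ≤ ψ (r y) - c y :=
          sub_le_sub (hψ (hrD hy) (hD.lineMap_mem (hrD hx₀) (hrD hx) ht) hry) hcy
      _ ≤ ψ (r x₀) - c x₀ := hmax ⟨hy, hry.trans htG.le⟩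
      _ = ψ (ρ 0) - κ 0 := by rw [hρ0, hκ0]
  have hdir : (1 : ℝ) ∈ posTangentConeAt (Icc (0 : ℝ) 1) 0 :=
    mem_posTangentConeAt_of_segment_subset (by simp [segment_eq_Icc])
  have := hφmax.hasFDerivWithinAt_nonpos hφ'.hasFDerivAt.hasFDerivWithinAt hdir
  simpa using this

lemma isSaddlePointOn_lagrangian (hr : ConvexOn ℝ s r) (hr₀ : MapsTo r s (Ici 0))
    (hc : ConvexOn ℝ s c) (hσ : 0 ≤ σ) (hx₀ : x₀ ∈ s) (hlt : r x₀ < G)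
    (hmax : IsMaxOn (reducedObjective σ G r c) {x ∈ s | r x ≤ G} x₀) :
    IsSaddlePointOn (Ici 0) s (lagrangian σ G r c) (saddleMultiplier σ G (r x₀)) x₀ := by
  intro d _ x hx
  have hrx₀ : 0 ≤ r x₀ := hr₀ hx₀
  have hG : 0 ≤ G := hrx₀.trans hlt.le
  have hsq : r x₀ ^ 2 < G ^ 2 := pow_lt_pow_left₀ hlt hrx₀ two_ne_zero
  have hfirst : -saddleMultiplier σ G (r x₀) * (r x - r x₀) ≤ c x - c x₀ :=
    deriv_mul_sub_le_sub_of_isMaxOn hr hc (convex_Ici 0) hr₀ (antitoneOn_mul_sqrt_sq_sub_sq G hσ)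
      hx₀ hlt (hasDerivAt_mul_sqrt_sq_sub_sq σ hsq) hmax hx
  calc lagrangian σ G r c (saddleMultiplier σ G (r x₀)) x
      ≤ lagrangian σ G r c (saddleMultiplier σ G (r x₀)) x₀ := by
        simp only [lagrangian]
        linarith
    _ = reducedObjective σ G r c x₀ := lagrangian_saddleMultiplier c hσ hG hsq
    _ ≤ lagrangian σ G r c d x₀ := reducedObjective_le_lagrangian σ d c hG hsq.le

theorem lasso_stmt7_general (hr : ConvexOn ℝ s r) (hr₀ : MapsTo r s (Ici 0))
    (hc : ConvexOn ℝ s c) (hc_bdd : BddBelow (c '' s)) (hσ : 0 ≤ σ) (hx₀ : x₀ ∈ s)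
    (hlt : r x₀ < G) (hmax : IsMaxOn (reducedObjective σ G r c) {x ∈ s | r x ≤ G} x₀) :
    sInf ((fun d ↦ sSup (lagrangian σ G r c d '' s)) '' Ici 0)
      = sSup (reducedObjective σ G r c '' {x ∈ s | r x ≤ G}) := by
  have hrx₀ : 0 ≤ r x₀ := hr₀ hx₀
  calc sInf ((fun d ↦ sSup (lagrangian σ G r c d '' s)) '' Ici 0)
      = lagrangian σ G r c (saddleMultiplier σ G (r x₀)) x₀ :=
        csInf_csSup_eq_of_isSaddlePointOn (saddleMultiplier_nonneg G hσ hrx₀) hx₀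
          (isSaddlePointOn_lagrangian hr hr₀ hc hσ hx₀ hlt hmax)
          fun _ hd ↦ bddAbove_lagrangian_image σ G hd hr₀ hc_bdd
    _ = reducedObjective σ G r c x₀ :=
        lagrangian_saddleMultiplier c hσ (hrx₀.trans hlt.le)
          (pow_lt_pow_left₀ hlt hrx₀ two_ne_zero)
    _ = sSup (reducedObjective σ G r c '' {x ∈ s | r x ≤ G}) :=
        (IsGreatest.csSup_eq (s := reducedObjective σ G r c '' {x ∈ s | r x ≤ G})
          ⟨mem_image_of_mem _ ⟨hx₀, hlt.le⟩, forall_mem_image.2 fun _ hx ↦ hmax hx⟩).symm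

end Lagrangian

section Lasso

variable {n : ℕ}

/-- The cone `Γ` of pairs `(ν, λ)` with `ν ≥ 0` and `0 ≤ λᵢ ≤ 2ν`, over which `ξ_dual` and `ξ_ov`
are suprema. -/
def multiplierCone (n : ℕ) : Set (ℝ × (Fin n → ℝ)) :=
  {p | 0 ≤ p.1 ∧ ∀ i, 0 ≤ p.2 i ∧ p.2 i ≤ 2 * p.1}

/-- The Euclidean norm `‖h + ν·1 - λ‖₂`, as a function of the pair `(ν, λ)`. -/
noncomputable def residualNorm (h : Fin n → ℝ) (p : ℝ × (Fin n → ℝ)) : ℝ :=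
  e2norm fun i ↦ h i + p.1 - p.2 i

/-- The linear cost `∑ λᵢ x̃ᵢ` over the last `k` coordinates, as a function of the pair `(ν, λ)`. -/
noncomputable def tailCost (k : ℕ) (xt : Fin n → ℝ) (p : ℝ × (Fin n → ℝ)) : ℝ :=
  tailSum k p.2 xt

lemma xiOvSet_eq_image (m k : ℕ) (σ : ℝ) (xt : Fin n → ℝ) (g : Fin m → ℝ) (h : Fin n → ℝ) :
    xiOvSet m n k σ xt g h = reducedObjective σ (e2norm g) (residualNorm h) (tailCost k xt) ''
      {p ∈ multiplierCone n | residualNorm h p ≤ e2norm g} := by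
  ext z
  constructor
  · rintro ⟨ν, lam, hν, hlam, hle, rfl⟩
    exact ⟨(ν, lam), ⟨⟨hν, hlam⟩, hle⟩, rfl⟩
  · rintro ⟨⟨ν, lam⟩, ⟨⟨hν, hlam⟩, hle⟩, rfl⟩
    exact ⟨ν, lam, hν, hlam, hle, rfl⟩

lemma supAtD_eq_sSup_image (m k : ℕ) (σ : ℝ) (xt : Fin n → ℝ) (g : Fin m → ℝ) (h : Fin n → ℝ) :
    supAtD m n k σ xt g h = fun d ↦
      sSup (lagrangian σ (e2norm g) (residualNorm h) (tailCost k xt) d '' multiplierCone n) := by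
  funext d
  refine congrArg sSup (ext fun z ↦ ⟨?_, ?_⟩)
  · rintro ⟨ν, lam, hν, hlam, rfl⟩
    exact ⟨(ν, lam), ⟨hν, hlam⟩, rfl⟩
  · rintro ⟨⟨ν, lam⟩, ⟨hν, hlam⟩, rfl⟩
    exact ⟨ν, lam, hν, hlam, rfl⟩

lemma convex_multiplierCone (n : ℕ) : Convex ℝ (multiplierCone n) := by
  rintro ⟨ν, lam⟩ ⟨hν, hlam⟩ ⟨μ, κ⟩ ⟨hμ, hκ⟩ a b ha hb -
  refine ⟨?_, fun i ↦ ⟨?_, ?_⟩⟩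
  · exact add_nonneg (mul_nonneg ha hν) (mul_nonneg hb hμ)
  · exact add_nonneg (mul_nonneg ha (hlam i).1) (mul_nonneg hb (hκ i).1)
  · calc a * lam i + b * κ i
        ≤ a * (2 * ν) + b * (2 * μ) :=
          add_le_add (mul_le_mul_of_nonneg_left (hlam i).2 ha)
            (mul_le_mul_of_nonneg_left (hκ i).2 hb)
      _ = 2 * (a * ν + b * μ) := by ring

lemma e2norm_eq_norm_toLp (x : Fin n → ℝ) : e2norm x = ‖WithLp.toLp 2 x‖ := by
  simp [e2norm, EuclideanSpace.norm_eq]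

lemma convexOn_e2norm : ConvexOn ℝ univ (e2norm : (Fin n → ℝ) → ℝ) := by
  have := convexOn_univ_norm.comp_linearMap
    (WithLp.linearEquiv 2 ℝ (Fin n → ℝ)).symm.toLinearMap
  rw [preimage_univ] at this
  exact this.congr fun x _ ↦ (e2norm_eq_norm_toLp x).symm

lemma convexOn_residualNorm (h : Fin n → ℝ) {s : Set (ℝ × (Fin n → ℝ))} (hs : Convex ℝ s) :
    ConvexOn ℝ s (residualNorm h) := by
  refine ⟨hs, fun p _ q _ a b ha hb hab ↦ ?_⟩
  have haffine : (fun i ↦ h i + (a • p + b • q).1 - (a • p + b • q).2 i)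
      = a • (fun i ↦ h i + p.1 - p.2 i) + b • fun i ↦ h i + q.1 - q.2 i := by
    ext i
    simp only [Prod.fst_add, Prod.snd_add, Prod.smul_fst, Prod.smul_snd, Pi.add_apply,
      Pi.smul_apply, smul_eq_mul]
    linear_combination -h i * hab
  rw [residualNorm, haffine]
  exact convexOn_e2norm.2 (mem_univ _) (mem_univ _) ha hb hab

lemma residualNorm_nonneg (h : Fin n → ℝ) (p : ℝ × (Fin n → ℝ)) : 0 ≤ residualNorm h p :=
  Real.sqrt_nonneg _

lemma convexOn_tailCost (k : ℕ) (xt : Fin n → ℝ) {s : Set (ℝ × (Fin n → ℝ))} (hs : Convex ℝ s) :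
    ConvexOn ℝ s (tailCost k xt) := by
  refine ⟨hs, fun p _ q _ a b _ _ _ ↦ le_of_eq ?_⟩
  simp only [tailCost, tailSum, smul_eq_mul, Finset.mul_sum, ← Finset.sum_add_distrib]
  refine Finset.sum_congr rfl fun i _ ↦ ?_
  simp only [Prod.snd_add, Prod.smul_snd, Pi.add_apply, Pi.smul_apply, smul_eq_mul]
  ring

lemma bddBelow_tailCost_image (k : ℕ) {xt : Fin n → ℝ} (hxt : ∀ i, 0 ≤ xt i) :
    BddBelow (tailCost k xt '' multiplierCone n) :=
  ⟨0, forall_mem_image.2 fun p hp ↦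
    show 0 ≤ tailSum k p.2 xt from
      Finset.sum_nonneg fun i _ ↦ mul_nonneg (hp.2 i).1 (hxt i)⟩

end Lasso

theorem lasso_stmt7 (m n k : ℕ) (hn : 1 ≤ n) (hk1 : 1 ≤ k) (hkn : k ≤ n)
    (xt : Fin n → ℝ) (hxt : kSparseNonneg n k xt)
    (σ : ℝ) (hσ : 0 < σ) (g : Fin m → ℝ) (h : Fin n → ℝ)
    (hmax : ∃ νh : ℝ, ∃ lamh : Fin n → ℝ, 0 ≤ νh ∧
      (∀ i, 0 ≤ lamh i ∧ lamh i ≤ 2 * νh) ∧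
      e2norm (fun i => h i + νh - lamh i) < e2norm g ∧
      IsGreatest (xiOvSet m n k σ xt g h)
        (σ * Real.sqrt (e2norm g ^ 2 - e2norm (fun i => h i + νh - lamh i) ^ 2)
          - tailSum k lamh xt)) :
    sInf ((supAtD m n k σ xt g h) '' {d : ℝ | 0 ≤ d})
      = sSup (xiOvSet m n k σ xt g h) := by
  obtain ⟨νh, lamh, hν, hlam, hlt, hgreatest⟩ := hmax
  rw [xiOvSet_eq_image] at hgreatest ⊢
  rw [supAtD_eq_sSup_image]
  have hΓ := convex_multiplierCone n
  exact lasso_stmt7_general (x₀ := (νh, lamh)) (convexOn_residualNorm h hΓ)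
    (fun p _ ↦ residualNorm_nonneg h p) (convexOn_tailCost k xt hΓ)
    (bddBelow_tailCost_image k hxt.2) hσ.le ⟨hν, hlam⟩ hlt
    fun _ hp ↦ hgreatest.2 (mem_image_of_mem _ hp)
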